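/- Let V be a finite-dimensional real inner product space, α > 0, f ≥ 0. Let a : V × V → ℝ be a bilinear map with a(v,v) ≥ α·‖v‖² for all v ∈ V, let c : V × V × V → ℝ be a trilinear map with c(v,v,v) = 0 for all v ∈ V, and let F : V → ℝ be a linear map with |F(v)| ≤ f·‖v‖ for all v ∈ V. Then there exists y ∈ V with ‖y‖ ≤ f/α such that a(y,v) + c(y,y,v) = F(v) for all v ∈ V. -/

import Mathlib

/-!
No `C¹` map that fixes the frontier of a bounded open set `U` sends `U` into it (Milnor–Rogers):
for such an `r`, the maps `x ↦ x + t • (r x - x)` permute `U` when `t > 0` is small, so the integral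
over `U` of their Jacobian is the volume of `U`. That integral is a polynomial in `t`, hence equals
the volume of `U` at `t = 1` too, where however the Jacobian of `r` vanishes identically.

Normalizing a nowhere zero map then shows that a continuous map equal to the identity near infinity
has a zero. A vector field `Φ` with `⟪Φ x, x⟫ ≥ 0` far from the origin can be deformed there into
the identity without creating a zero, so it has one too. Coercivity gives this sign condition for
the residual `y ↦ a(y, ·) + c(y, y, ·) - F`, and also bounds its zeros.
-/

open Bornology Filter Function MeasureTheory Metric Module Set Topology
open scoped NNReal Polynomial RealInnerProductSpace

section PolynomialFamilies

theorem integral_eval_eq_of_infinite {X 𝕜 : Type*} [MeasurableSpace X] {μ : Measure X} [RCLike 𝕜]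
    {p : X → 𝕜[X]} {n : ℕ} (hdeg : ∀ x, (p x).natDegree ≤ n) {S : Set 𝕜} (hS : S.Infinite) {C : 𝕜}
    (hint : ∀ t ∈ S, Integrable (fun x ↦ (p x).eval t) μ)
    (hC : ∀ t ∈ S, ∫ x, (p x).eval t ∂μ = C) (s : 𝕜) :
    ∫ x, (p x).eval s ∂μ = C := by
  obtain ⟨T, hTS, hcard⟩ := hS.exists_subset_card_eq (n + 1)
  let w (t : 𝕜) : 𝕜 := (Lagrange.basis T id t).eval s
  have hT : T.Nonempty := Finset.card_pos.1 (by lia)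
  have hw : ∑ t ∈ T, w t = 1 := by
    rw [← Polynomial.eval_finsetSum, Lagrange.sum_basis (injOn_id _) hT, Polynomial.eval_one]
  have heval (x : X) : (p x).eval s = ∑ t ∈ T, w t * (p x).eval t := by
    have hlt : (p x).degree < T.card := by
      rw [hcard]
      exact Polynomial.degree_le_natDegree.trans_lt (mod_cast Nat.lt_succ_of_le (hdeg x))
    conv_lhs => rw [Lagrange.eq_interpolate (injOn_id _) hlt]
    simp only [Lagrange.interpolate_apply, Polynomial.eval_finsetSum, Polynomial.eval_mul,
      Polynomial.eval_C, id, w, mul_comm]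
  calc ∫ x, (p x).eval s ∂μ = ∑ t ∈ T, w t * ∫ x, (p x).eval t ∂μ := by
        simp_rw [heval]
        rw [integral_finsetSum _ fun t ht ↦ (hint t (hTS ht)).const_mul (w t)]
        simp_rw [integral_const_mul]
    _ = ∑ t ∈ T, w t * C := Finset.sum_congr rfl fun t ht ↦ by rw [hC t (hTS ht)]
    _ = C := by rw [← Finset.sum_mul, hw, one_mul]

theorem exists_polynomial_eval_eq_det_one_add_smul {R M : Type*} [CommRing R] [Nontrivial R]
    [AddCommGroup M] [Module R M] [Module.Free R M] [Module.Finite R M] (A : M →ₗ[R] M) :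
    ∃ p : R[X], p.natDegree ≤ finrank R M ∧ ∀ t, p.eval t = LinearMap.det (1 + t • A) := by
  let b := finBasis R M
  let B := LinearMap.toMatrix b b A
  refine ⟨((Polynomial.X : R[X]) • B.map Polynomial.C + (1 : Matrix _ _ R).map Polynomial.C).det,
    by simpa only [Fintype.card_fin] using Polynomial.natDegree_det_X_add_C_le B 1, fun t ↦ ?_⟩
  have hB : LinearMap.toMatrix b b (1 + t • A) = 1 + t • B := by
    rw [map_add, map_smul, LinearMap.toMatrix_one]
  rw [← LinearMap.det_toMatrix b, hB, ← Polynomial.coe_evalRingHom, RingHom.map_det, add_comm]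
  congr 1
  ext i j
  rcases eq_or_ne i j with rfl | hij
  · simp [mul_comm t]
  · simp [Matrix.one_apply_ne hij, mul_comm t]

end PolynomialFamilies

section LipschitzPerturbation

theorem bijective_id_add_of_lipschitzWith {E : Type*} [NormedAddCommGroup E] [CompleteSpace E]
    {g : E → E} {K : ℝ≥0} (hg : LipschitzWith K g) (hK : K < 1) :
    Bijective fun x ↦ x + g x := by
  refine bijective_iff_existsUnique _ |>.2 fun y ↦ ?_
  have hcontr : ContractingWith K fun x ↦ y - g x :=
    ⟨hK, by simpa only [zero_add] using (LipschitzWith.const y).sub hg⟩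
  have hfix (x : E) : x + g x = y ↔ IsFixedPt (fun x ↦ y - g x) x := by
    rw [IsFixedPt, sub_eq_iff_eq_add, eq_comm]
  exact ⟨_, (hfix _).2 hcontr.fixedPoint_isFixedPt,
    fun x hx ↦ hcontr.fixedPoint_unique ((hfix x).1 hx)⟩

theorem image_id_add_eq_of_lipschitzWith {E : Type*} [NormedAddCommGroup E] [CompleteSpace E]
    {g : E → E} {K : ℝ≥0} (hg : LipschitzWith K g) (hK : K < 1) {s : Set E}
    (hs : ∀ x ∉ s, g x = 0) :
    (fun x ↦ x + g x) '' s = s := by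
  refine compl_injective ?_
  rw [← image_compl_eq (bijective_id_add_of_lipschitzWith hg hK)]
  calc (fun x ↦ x + g x) '' sᶜ = id '' sᶜ := image_congr fun x hx ↦ by rw [hs x hx, add_zero, id]
    _ = sᶜ := image_id _

theorem inter_frontier_nonempty_of_isPreconnected {X : Type*} [TopologicalSpace X] {s t : Set X}
    (ht : IsPreconnected t) (hs : (t ∩ s).Nonempty) (hsc : (t ∩ sᶜ).Nonempty) :
    (t ∩ frontier s).Nonempty := by
  by_contra hempty
  have hcover : t ⊆ interior s ∪ interior sᶜ := by
    rw [← compl_frontier_eq_union_interior, subset_compl_iff_disjoint_right]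
    exact disjoint_iff_inter_eq_empty.2 (not_nonempty_iff_eq_empty.1 hempty)
  obtain ⟨x, hxt, hxs⟩ := hs
  obtain ⟨y, hyt, hys⟩ := hsc
  have hx : x ∈ interior s := (hcover hxt).resolve_right fun h ↦ interior_subset h hxs
  have hy : y ∈ interior sᶜ := (hcover hyt).resolve_left fun h ↦ hys (interior_subset h)
  obtain ⟨z, -, hzs, hzsc⟩ :=
    ht _ _ isOpen_interior isOpen_interior hcover ⟨x, hxt, hx⟩ ⟨y, hyt, hy⟩
  exact interior_subset hzsc (interior_subset hzs)

-- A segment leaving `s` crosses the frontier, where the function is zero.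
theorem lipschitzWith_indicator_of_lipschitzOnWith_closure {E F : Type*} [SeminormedAddCommGroup E]
    [NormedSpace ℝ E] [PseudoMetricSpace F] [Zero F] {s : Set E} {g : E → F} {K : ℝ≥0}
    (hg : LipschitzOnWith K g (closure s)) (hs : ∀ x ∈ frontier s, g x = 0) :
    LipschitzWith K (s.indicator g) := by
  have hcross {x y : E} (hx : x ∈ s) (hy : y ∉ s) : dist (g x) 0 ≤ K * dist x y := by
    obtain ⟨z, hz, hzs⟩ : (segment ℝ x y ∩ frontier s).Nonempty :=
      inter_frontier_nonempty_of_isPreconnected (convex_segment x y).isPreconnected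
        ⟨x, left_mem_segment ℝ x y, hx⟩ ⟨y, right_mem_segment ℝ x y, hy⟩
    calc dist (g x) 0 = dist (g x) (g z) := by rw [hs z hzs]
      _ ≤ K * dist x z := hg.dist_le_mul x (subset_closure hx) z (frontier_subset_closure hzs)
      _ ≤ K * dist x y := by
        gcongr
        linarith [dist_add_dist_of_mem_segment hz, dist_nonneg (x := z) (y := y)]
  refine LipschitzWith.of_dist_le_mul fun x y ↦ ?_
  by_cases hx : x ∈ s <;> by_cases hy : y ∈ s
  · simpa only [indicator_of_mem, hx, hy] using
      hg.dist_le_mul x (subset_closure hx) y (subset_closure hy)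
  · simpa only [indicator_of_mem hx, indicator_of_notMem hy] using hcross hx hy
  · simpa only [indicator_of_notMem hx, indicator_of_mem hy, dist_comm] using hcross hy hx
  · simp only [indicator_of_notMem hx, indicator_of_notMem hy, dist_self]
    positivity

end LipschitzPerturbation

section Jacobian

variable {E : Type*} [NormedAddCommGroup E] [NormedSpace ℝ E] [FiniteDimensional ℝ E]

theorem eventually_forall_det_one_add_smul_pos (K : ℝ) :
    ∀ᶠ t in 𝓝 (0 : ℝ), ∀ A : E →L[ℝ] E, ‖A‖ ≤ K → 0 < (1 + t • A).det := by
  have hproper : ProperSpace (E →L[ℝ] E) := FiniteDimensional.proper ℝ _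
  have hcont : Continuous fun q : ℝ × (E →L[ℝ] E) ↦ (1 + q.1 • q.2).det :=
    ContinuousLinearMap.continuous_det.comp (by fun_prop)
  have hpos (A : E →L[ℝ] E) : 0 < (1 + (0 : ℝ) • A).det := by simp [ContinuousLinearMap.det]
  simpa only [mem_closedBall_zero_iff] using
    (isCompact_closedBall (0 : E →L[ℝ] E) K).eventually_forall_of_forall_eventually fun A _ ↦
      hcont.continuousAt.eventually (lt_mem_nhds (hpos A))

variable [MeasurableSpace E] [BorelSpace E] (μ : Measure E) [μ.IsAddHaarMeasure]
  {s : Set E} {g : E → E} {K : ℝ≥0}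

theorem setIntegral_det_one_add_fderiv_of_pos (hsm : MeasurableSet s) (hμs : μ s ≠ ⊤)
    (hg : LipschitzWith K g) (hK : K < 1) (hd : ∀ x ∈ s, DifferentiableAt ℝ g x)
    (hs : ∀ x ∉ s, g x = 0) (hpos : ∀ x ∈ s, 0 < (1 + fderiv ℝ g x).det) :
    IntegrableOn (fun x ↦ (1 + fderiv ℝ g x).det) s μ ∧
      ∫ x in s, (1 + fderiv ℝ g x).det ∂μ = μ.real s := by
  have hderiv : ∀ x ∈ s, HasFDerivWithinAt (fun x ↦ x + g x) (1 + fderiv ℝ g x) s x := fun x hx ↦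
    ((hasFDerivAt_id x).add (hd x hx).hasFDerivAt).hasFDerivWithinAt
  have hinj : InjOn (fun x ↦ x + g x) s := (bijective_id_add_of_lipschitzWith hg hK).1.injOn
  have habs : EqOn (fun x ↦ |(1 + fderiv ℝ g x).det| • (1 : ℝ))
      (fun x ↦ (1 + fderiv ℝ g x).det) s := fun x hx ↦ by
    simp only [abs_of_pos (hpos x hx), smul_eq_mul, mul_one]
  have himage := image_id_add_eq_of_lipschitzWith hg hK hs
  have hintegrable :=
    integrableOn_image_iff_integrableOn_abs_det_fderiv_smul μ hsm hderiv hinj fun _ ↦ (1 : ℝ)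
  have hintegral :=
    integral_image_eq_integral_abs_det_fderiv_smul μ hsm hderiv hinj fun _ ↦ (1 : ℝ)
  rw [himage] at hintegrable hintegral
  constructor
  · exact (hintegrable.1 (integrableOn_const hμs)).congr_fun habs hsm
  · rw [← setIntegral_congr_fun hsm habs, ← hintegral, setIntegral_const, smul_eq_mul, mul_one]

theorem setIntegral_det_one_add_fderiv (hsm : MeasurableSet s) (hμs : μ s ≠ ⊤)
    (hg : LipschitzWith K g) (hd : ∀ x ∈ s, DifferentiableAt ℝ g x) (hs : ∀ x ∉ s, g x = 0) :
    ∫ x in s, (1 + fderiv ℝ g x).det ∂μ = μ.real s := by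
  choose p hdeg heval using fun x ↦
    exists_polynomial_eval_eq_det_one_add_smul (fderiv ℝ g x : E →ₗ[ℝ] E)
  have hdet (t : ℝ) (x : E) : (p x).eval t = (1 + t • fderiv ℝ g x).det := heval x t
  let S : Set ℝ := {t | ‖t‖ * K < 1 ∧ ∀ A : E →L[ℝ] E, ‖A‖ ≤ K → 0 < (1 + t • A).det}
  have hS : S ∈ 𝓝 0 := by
    have hcont : Continuous fun t : ℝ ↦ ‖t‖ * K := by fun_prop
    exact (hcont.tendsto' 0 0 (by simp) |>.eventually_lt_const one_pos).and
      (eventually_forall_det_one_add_smul_pos K)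
  have hsmall : ∀ t ∈ S, IntegrableOn (fun x ↦ (p x).eval t) s μ ∧
      ∫ x in s, (p x).eval t ∂μ = μ.real s := by
    rintro t ⟨htK, hpos⟩
    have hsmul (x : E) : fderiv ℝ (t • g) x = t • fderiv ℝ g x :=
      congrFun (fderiv_const_smul_field t) x
    simp_rw [hdet, ← hsmul]
    refine setIntegral_det_one_add_fderiv_of_pos μ hsm hμs ((lipschitzWith_smul t).comp hg) ?_
      (fun x hx ↦ (hd x hx).const_smul t) (fun x hx ↦ by simp [hs x hx]) fun x _ ↦ ?_
    · exact_mod_cast htK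
    · rw [hsmul]
      exact hpos _ (norm_fderiv_le_of_lipschitz ℝ hg)
  simpa only [hdet, one_smul] using integral_eval_eq_of_infinite hdeg (infinite_of_mem_nhds 0 hS)
    (fun t ht ↦ (hsmall t ht).1) (fun t ht ↦ (hsmall t ht).2) 1

end Jacobian

section NoRetraction

variable {E : Type*} [NormedAddCommGroup E] [NormedSpace ℝ E] [FiniteDimensional ℝ E]

theorem det_fderiv_eq_zero_of_eventually_mem {r : E → E} {x : E} {s : Set E}
    (hr : ContDiffAt ℝ 1 r x) (hs : interior s = ∅) (hmem : ∀ᶠ y in 𝓝 x, r y ∈ s) :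
    (fderiv ℝ r x).det = 0 := by
  by_contra hdet
  have hsurj : (fderiv ℝ r x).range = ⊤ :=
    LinearMap.range_eq_top.2 (LinearMap.equivOfDetNeZero _ hdet).surjective
  have hopen : map r (𝓝 x) = 𝓝 (r x) :=
    (hr.hasStrictFDerivAt one_ne_zero).map_nhds_eq_of_surj hsurj
  have hnhds : s ∈ 𝓝 (r x) := hopen ▸ hmem
  exact hs.subset (mem_interior_iff_mem_nhds.2 hnhds)

theorem not_mapsTo_frontier_of_eqOn_id {U : Set E} (hU : IsOpen U) (hUb : IsBounded U)
    (hUne : U.Nonempty) {r : E → E} {K : ℝ≥0} (hlip : LipschitzOnWith K r (closure U))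
    (hr : ContDiffOn ℝ 1 r U) (hfix : EqOn r id (frontier U)) :
    ¬ MapsTo r U (frontier U) := by
  intro hmaps
  borelize E
  let μ : Measure E := Measure.addHaar
  let g : E → E := U.indicator fun x ↦ r x - x
  have hg : LipschitzWith (K + 1) g :=
    lipschitzWith_indicator_of_lipschitzOnWith_closure (hlip.sub LipschitzWith.id.lipschitzOnWith)
      fun x hx ↦ sub_eq_zero.2 (hfix hx)
  have hU_frontier : interior (frontier U) = ∅ := by
    rw [← frontier_compl, interior_frontier hU.isClosed_compl]
  have hr_diff : ∀ x ∈ U, ContDiffAt ℝ 1 r x := fun x hx ↦ hr.contDiffAt (hU.mem_nhds hx)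
  have hg_deriv : ∀ x ∈ U, HasFDerivAt g (fderiv ℝ r x - 1) x := fun x hx ↦
    ((hr_diff x hx).differentiableAt one_ne_zero).hasFDerivAt.sub (hasFDerivAt_id x)
      |>.congr_of_eventuallyEq (eqOn_indicator.eventuallyEq_of_mem (hU.mem_nhds hx))
  have hdet : ∀ x ∈ U, (1 + fderiv ℝ g x).det = 0 := fun x hx ↦ by
    rw [(hg_deriv x hx).fderiv, add_sub_cancel]
    exact det_fderiv_eq_zero_of_eventually_mem (hr_diff x hx) hU_frontier
      (mem_of_superset (hU.mem_nhds hx) hmaps)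
  have hvol : μ.real U = 0 := by
    rw [← setIntegral_det_one_add_fderiv μ hU.measurableSet hUb.measure_lt_top.ne hg
      (fun x hx ↦ (hg_deriv x hx).differentiableAt) fun x hx ↦ indicator_of_notMem hx _,
      setIntegral_congr_fun hU.measurableSet hdet, integral_zero]
  exact (ENNReal.toReal_pos (hU.measure_pos μ hUne).ne' hUb.measure_lt_top.ne).ne' hvol

end NoRetraction

section Zeros

variable {E : Type*} [NormedAddCommGroup E] [InnerProductSpace ℝ E] [FiniteDimensional ℝ E]

theorem exists_eq_zero_of_contDiffOn_of_eqOn_sphere {h : E → E} {ρ : ℝ} (hρ : 0 < ρ)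
    (hh : ContDiffOn ℝ 1 h (closedBall 0 ρ)) (hfix : EqOn h id (sphere 0 ρ)) :
    ∃ x ∈ closedBall 0 ρ, h x = 0 := by
  by_contra! hne
  let r : E → E := fun x ↦ (ρ / ‖h x‖) • h x
  have hr : ContDiffOn ℝ 1 r (closedBall 0 ρ) :=
    (contDiffOn_const.div (hh.norm ℝ hne) fun x hx ↦ norm_ne_zero_iff.2 (hne x hx)).smul hh
  obtain ⟨K, hK⟩ := hr.exists_lipschitzOnWith one_ne_zero (convex_closedBall 0 ρ)
    (isCompact_closedBall 0 ρ)
  refine not_mapsTo_frontier_of_eqOn_id isOpen_ball isBounded_ball (nonempty_ball.2 hρ)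
    (closure_ball (0 : E) hρ.ne' ▸ hK) (hr.mono ball_subset_closedBall) ?_ ?_
  · rw [frontier_ball _ hρ.ne']
    intro x hx
    simp only [r, hfix hx, id, mem_sphere_zero_iff_norm.1 hx, div_self hρ.ne', one_smul]
  · rw [frontier_ball _ hρ.ne']
    intro x hx
    have hpos : 0 < ‖h x‖ := norm_pos_iff.2 (hne x (ball_subset_closedBall hx))
    rw [mem_sphere_zero_iff_norm, norm_smul, norm_div, norm_norm, div_mul_cancel₀ _ hpos.ne',
      Real.norm_of_nonneg hρ.le]

theorem exists_eq_zero_of_eventually_eq_self {h : E → E} (hh : Continuous h)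
    (hfix : ∀ᶠ x in cobounded E, h x = x) : ∃ x, h x = 0 := by
  by_contra! hne
  obtain ⟨R, hR, hfixR⟩ := (atTop_basis_Ioi' 0).cobounded_of_norm.eventually_iff.1 hfix
  have hρ : 0 < R + 1 := by positivity
  have hfar : IsOpen {x : E | R < ‖x‖} := isOpen_lt continuous_const continuous_norm
  have hcontDiff : ContDiffOn ℝ 1 h {x | R < ‖x‖} := contDiffOn_id.congr fun x hx ↦ hfixR hx
  -- An approximation of `h` with error less than `‖h x‖` at every `x` has no zero either.
  obtain ⟨g, hg, hgh, hgfix, -⟩ := hh.exists_contDiff_approx_and_eqOn 1 hh.norm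
    (fun x ↦ norm_pos_iff.2 (hne x)) (isClosed_sphere (x := (0 : E)) (ε := R + 1))
    (hfar.mem_nhdsSet.2 fun x hx ↦ by
      rw [mem_ofPred_eq, mem_sphere_zero_iff_norm.1 hx]; exact lt_add_one R) hcontDiff
  obtain ⟨x, -, hx⟩ := exists_eq_zero_of_contDiffOn_of_eqOn_sphere hρ hg.contDiffOn fun x hx ↦
    (hgfix hx).trans (hfixR (by
      rw [mem_preimage, mem_sphere_zero_iff_norm.1 hx]; exact lt_add_one R))
  simpa only [hx, dist_zero_left, lt_self_iff_false] using hgh x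

theorem exists_eq_zero_of_eventually_inner_nonneg {Φ : E → E} (hΦ : Continuous Φ)
    (hpos : ∀ᶠ x in cobounded E, 0 ≤ ⟪Φ x, x⟫) : ∃ x, Φ x = 0 := by
  obtain ⟨R, hR, hposR⟩ := (atTop_basis_Ioi' 0).cobounded_of_norm.eventually_iff.1 hpos
  let s (x : E) : ℝ := min 1 (max 0 (‖x‖ - R))
  have hs : Continuous s := by fun_prop
  have hh : Continuous fun x ↦ (1 - s x) • Φ x + s x • x :=
    ((continuous_const.sub hs).smul hΦ).add (hs.smul continuous_id)
  have hfix : ∀ᶠ x in cobounded E, (1 - s x) • Φ x + s x • x = x := by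
    filter_upwards [tendsto_norm_cobounded_atTop.eventually_ge_atTop (R + 1)] with x hx
    have hsx : s x = 1 := min_eq_left (le_max_of_le_right (by linarith))
    rw [hsx, sub_self, zero_smul, one_smul, zero_add]
  obtain ⟨x, hx⟩ := exists_eq_zero_of_eventually_eq_self hh hfix
  refine ⟨x, ?_⟩
  rcases le_or_gt ‖x‖ R with hxR | hxR
  · have hsx : s x = 0 := by simp [s, hxR]
    simpa only [hsx, sub_zero, one_smul, zero_smul, add_zero] using hx
  · have hsx : 0 < s x := lt_min one_pos (lt_max_of_lt_right (sub_pos.2 hxR))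
    have hsx_le : 0 ≤ 1 - s x := sub_nonneg.2 (min_le_left _ _)
    have hinner : (1 - s x) * ⟪Φ x, x⟫ + s x * ‖x‖ ^ 2 = 0 := by
      rw [← real_inner_self_eq_norm_sq, ← real_inner_smul_left, ← real_inner_smul_left,
        ← inner_add_left, hx, inner_zero_left]
    linarith [mul_nonneg hsx_le (hposR hxR), mul_pos hsx (pow_pos (hR.trans hxR) 2)]

end Zeros

section Coercive

theorem le_div_of_mul_sq_le_mul {𝕜 : Type*} [Field 𝕜] [LinearOrder 𝕜] [IsStrictOrderedRing 𝕜]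
    {a b x : 𝕜} (ha : 0 < a) (hb : 0 ≤ b) (h : a * x ^ 2 ≤ b * x) : x ≤ b / a := by
  rcases le_or_gt x 0 with hx | hx
  · exact hx.trans (by positivity)
  · rw [le_div_iff₀' ha]
    exact le_of_mul_le_mul_right (by linarith) hx

variable {V : Type*} [NormedAddCommGroup V] [NormedSpace ℝ V] [FiniteDimensional ℝ V]

theorem exists_eq_zero_of_eventually_apply_self_nonneg {G : V → StrongDual ℝ V}
    (hG : Continuous G) (hpos : ∀ᶠ y in cobounded V, 0 ≤ G y y) : ∃ y, G y = 0 := by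
  let e : EuclideanSpace ℝ (Fin (finrank ℝ V)) ≃L[ℝ] V := toEuclidean.symm
  let Φ (x : EuclideanSpace ℝ (Fin (finrank ℝ V))) :=
    (InnerProductSpace.toDual ℝ _).symm (G (e x) ∘L e.toContinuousLinearMap)
  have hinner x y : ⟪Φ x, y⟫ = G (e x) (e y) := InnerProductSpace.toDual_symm_apply
  have hΦ : Continuous Φ := by fun_prop
  have hnonneg : ∀ᶠ x in cobounded _, 0 ≤ ⟪Φ x, x⟫ := by
    simp only [hinner]
    exact e.antilipschitz.tendsto_cobounded.eventually hpos
  obtain ⟨x, hx⟩ := exists_eq_zero_of_eventually_inner_nonneg hΦ hnonneg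
  refine ⟨e x, ContinuousLinearMap.ext fun v ↦ ?_⟩
  rw [← e.apply_symm_apply v, ← hinner, hx, inner_zero_left]
  rfl

end Coercive

theorem stmt_9_general (V : Type*) [NormedAddCommGroup V] [NormedSpace ℝ V]
    [FiniteDimensional ℝ V] (α f : ℝ) (hα : 0 < α) (hf : 0 ≤ f)
    (B : V → V →ₗ[ℝ] ℝ) (hB : ∀ v, Continuous fun y ↦ B y v) (hcoer : ∀ v, α * ‖v‖ ^ 2 ≤ B v v)
    (F : V →ₗ[ℝ] ℝ) (hF : ∀ v, |F v| ≤ f * ‖v‖) :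
    ∃ y : V, ‖y‖ ≤ f / α ∧ ∀ v, B y v = F v := by
  let G (y : V) : StrongDual ℝ V := LinearMap.toContinuousLinearMap (B y - F)
  have hG : Continuous G := continuous_clm_apply.2 fun v ↦ (hB v).sub continuous_const
  have hG_far : ∀ᶠ y in cobounded V, 0 ≤ G y y := by
    filter_upwards [tendsto_norm_cobounded_atTop.eventually_ge_atTop (f / α)] with y hy
    calc 0 ≤ (α * ‖y‖ - f) * ‖y‖ :=
          mul_nonneg (sub_nonneg.2 ((div_le_iff₀' hα).1 hy)) (norm_nonneg y)
      _ = α * ‖y‖ ^ 2 - f * ‖y‖ := by ring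
      _ ≤ B y y - F y := sub_le_sub (hcoer y) ((le_abs_self _).trans (hF y))
  obtain ⟨y, hy⟩ := exists_eq_zero_of_eventually_apply_self_nonneg hG hG_far
  have hBF (v : V) : B y v = F v := sub_eq_zero.1 (DFunLike.congr_fun hy v)
  refine ⟨y, le_div_of_mul_sq_le_mul hα hf ?_, hBF⟩
  calc α * ‖y‖ ^ 2 ≤ B y y := hcoer y
    _ = F y := hBF y
    _ ≤ f * ‖y‖ := (le_abs_self _).trans (hF y)

/-- Abstract form of Proposition 3.1: existence of a solution of the
discretized regularized penalized Navier–Stokes system in a finite-dimensional real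
inner product space, with the bound `‖y‖ ≤ f/α`. -/
theorem stmt_9 (V : Type*) [NormedAddCommGroup V] [InnerProductSpace ℝ V]
    [FiniteDimensional ℝ V]
    (α f : ℝ) (hα : 0 < α) (hf : 0 ≤ f)
    (a : V →ₗ[ℝ] V →ₗ[ℝ] ℝ) (ha : ∀ v, α * ‖v‖ ^ 2 ≤ a v v)
    (c : V →ₗ[ℝ] V →ₗ[ℝ] V →ₗ[ℝ] ℝ) (hc : ∀ v, c v v v = 0)
    (F : V →ₗ[ℝ] ℝ) (hF : ∀ v, |F v| ≤ f * ‖v‖) :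
    ∃ y : V, ‖y‖ ≤ f / α ∧ ∀ v, a y v + c y y v = F v :=
  stmt_9_general V α f hα hf (fun y ↦ a y + c y y)
    (fun v ↦ (a.flip v).continuous_of_finiteDimensional.add
      ((c.compr₂ (LinearMap.applyₗ v)).toContinuousBilinearMap.continuous.clm_apply continuous_id))
    (fun v ↦ by simpa [hc] using ha v) F hF
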